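/- (Predictable covariation between the RWI position martingale and sign martingale.) Let ε_n = 1_{S_n∈V_0} − 1_{S_n∈V_1} and I_n = Σ_{k=0}^n ε_k. Then for every n ≥ 0, almost surely E[ξ_{n+1}·ε_{n+1} | F_n] = (2ζ − E[ξ_{n+1} | F_n])·ε_n, and for every n ≥ 1, almost surely Σ_{k=1}^n ( E[ξ_k ε_k | F_{k−1}] − E[ξ_k | F_{k−1}]·E[ε_k | F_{k−1}] ) = −2np·θ + 2(ζ − p·μ)·I_{n−1}. -/

import Mathlib

open MeasureTheory ProbabilityTheory Real Filter Set
open scoped BigOperators NNReal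

noncomputable section

namespace RWI

abbrev E : Type := EuclideanSpace ℝ (Fin 3)

def vec (x y z : ℝ) : E := (EuclideanSpace.equiv (Fin 3) ℝ).symm ![x, y, z]

/-- The two families of vertices of the `1h` ice lattice. -/
def V (a h : ℝ) (i : Fin 2) : Set E :=
  {v | ∃ k l n : ℤ, v = vec (a * ((i : ℕ) + (3 / 2) * k))
      (a * ((Real.sqrt 3 / 2) * k + Real.sqrt 3 * l)) (h * n)}

/-- Horizontal jump from a vertex of type `i` in direction `j`. -/
def w (a : ℝ) (i : Fin 2) (j : Fin 3) : E :=
  vec (a * Real.cos (2 * (j : ℕ) * π / 3 + (i : ℕ) * π))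
      (a * Real.sin (2 * (j : ℕ) * π / 3 + (i : ℕ) * π)) 0

/-- `S` is a random walk on ice with parameters `a, h, p, α, q` and natural filtration `F`. -/
structure IsRWI {Ω : Type} [MeasurableSpace Ω] (P : Measure Ω)
    (a h p α : ℝ) (q : Fin 2 → Fin 3 → ℝ)
    (S : ℕ → Ω → E) (F : ℕ → MeasurableSpace Ω) : Prop where
  prob : IsProbabilityMeasure P
  ha : 0 < a
  hh : 0 < h
  hp0 : 0 ≤ p
  hp1 : p ≤ 1
  hα0 : 0 < α
  hα1 : α < 1
  hq : ∀ i j, 0 ≤ q i j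
  hqsum : ∀ i, q i 0 + q i 1 + q i 2 = 1 - p
  hS0 : ∀ ω, S 0 ω = 0
  hSmeas : ∀ n, Measurable (S n)
  hF : ∀ n, F n =
    MeasurableSpace.comap (fun ω (k : Fin n) => S ((k : ℕ) + 1) ω - S (k : ℕ) ω)
      MeasurableSpace.pi
  hTrans : ∀ (n : ℕ) (f : E → ℝ), Measurable f → (∃ C, ∀ x, |f x| ≤ C) →
    P[fun ω => f (S (n + 1) ω)|F n] =ᵐ[P]
      fun ω => ∑ i : Fin 2, (V a h i).indicator (fun _ => (1 : ℝ)) (S n ω) *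
        (α * p * f (S n ω + vec 0 0 h) + (1 - α) * p * f (S n ω + vec 0 0 (-h)) +
          ∑ j : Fin 3, q i j * f (S n ω + w a i j))

def uu (q : Fin 2 → Fin 3 → ℝ) (i : Fin 2) : ℝ := q i 1 + q i 2

def vv (q : Fin 2 → Fin 3 → ℝ) (i : Fin 2) : ℝ := q i 1 - q i 2

/-- The drift vector `μ` of the RWI. -/
def muI (a h p α : ℝ) (q : Fin 2 → Fin 3 → ℝ) : E :=
  vec (3 * a / 4 * (-(uu q 0) + uu q 1)) (a * Real.sqrt 3 / 4 * (vv q 0 - vv q 1))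
    (h * p * (2 * α - 1))

/-- The vector `θ` of the RWI. -/
def thetaI (a p : ℝ) (q : Fin 2 → Fin 3 → ℝ) : E :=
  vec (a * ((1 - p) - 3 / 4 * (uu q 0 + uu q 1))) (a * Real.sqrt 3 / 4 * (vv q 0 + vv q 1)) 0

/-- The sign process `ε_n = 1_{S_n ∈ V_0} - 1_{S_n ∈ V_1}`. -/
def epsI {Ω : Type} (a h : ℝ) (S : ℕ → Ω → E) (n : ℕ) (ω : Ω) : ℝ :=
  (V a h 0).indicator (fun _ => (1 : ℝ)) (S n ω) - (V a h 1).indicator (fun _ => (1 : ℝ)) (S n ω)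

end RWI

namespace RWI

/-- The vector `ζ = (0, 0, hp(2α−1))`. -/
def zetaI (h p α : ℝ) : E := vec 0 0 (h * p * (2 * α - 1))

/-- `I_n = ∑_{k=0}^n ε_k`. -/
def II {Ω : Type} (a h : ℝ) (S : ℕ → Ω → E) (n : ℕ) (ω : Ω) : ℝ :=
  ∑ k ∈ Finset.range (n + 1), epsI a h S k ω

end RWI

/-!
A step of the walk is either vertical, and then keeps the sign `ε`, or horizontal, and then flips
it while having no vertical part. In both cases `ε_{n+1} ξ_{n+1} = ε_n (2 ξ' - ξ_{n+1})`, where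
`ξ'` is the vertical part of `ξ_{n+1}`, and `E[ξ' | F_n] = ζ` whatever the current vertex is.
Averaging over the five jumps also gives `E[ξ_{n+1} | F_n] = μ + ε_n θ` and
`E[ε_{n+1} | F_n] = (2p - 1) ε_n`; since `ε_n² = 1`, the conditional covariance at each step is
`-2p θ + 2 ε_n (ζ - p μ)`.

The transition rule is given for bounded real test functions of `S_{n+1}` only. As the lattice is
countable and only finitely many jumps leave each vertex, it carries over, by conditioning on the
value of `S_n`, to integrable vector-valued functions of the pair `(S_n, S_{n+1})`.
-/

section ConditionalExpectation

variable {Ω : Type*} {m mΩ : MeasurableSpace Ω} {μ : Measure Ω} {s : Set Ω}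

lemma condExp_ae_eq_restrict_of_ae_eq_restrict {G : Type*} [NormedAddCommGroup G]
    [NormedSpace ℝ G] [CompleteSpace G] {f g : Ω → G} (hf : Integrable f μ) (hg : Integrable g μ)
    (hs : MeasurableSet[m] s) (h : f =ᵐ[μ.restrict s] g) :
    μ[f | m] =ᵐ[μ.restrict s] μ[g | m] := by
  have hzero : μ[f - g | m] =ᵐ[μ.restrict s] 0 :=
    condExp_ae_eq_restrict_zero hs (h.mono fun ω hω => by simp [hω])
  filter_upwards [hzero, ae_restrict_of_ae (condExp_sub hf hg m)] with ω h0 hsub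
  exact sub_eq_zero.1 (hsub.symm.trans h0)

lemma ae_eq_restrict_zero_of_condExp {f : Ω → ℝ} (hm : m ≤ mΩ) [SigmaFinite (μ.trim hm)]
    (hf0 : 0 ≤ f) (hf : Integrable f μ) (hs : MeasurableSet[m] s)
    (h : μ[f | m] =ᵐ[μ.restrict s] 0) : f =ᵐ[μ.restrict s] 0 := by
  rw [← setIntegral_eq_zero_iff_of_nonneg_ae (ae_of_all _ hf0) hf.integrableOn,
    ← setIntegral_condExp hm hf hs, integral_congr_ae h]
  simp

end ConditionalExpectation

/-- Conditionally on `m`, the variable `Y` is obtained from the `m`-measurable variable `X` by one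
step of a Markov chain with finitely many moves, `i : ι` being the move `x ↦ T i x`, of
probability `c i x`. Only the total weight of the moves leading to a given set is constrained, so
distinct moves may share a target. -/
structure IsFiniteTransition {Ω α β ι : Type*} [Fintype ι] [MeasurableSpace α] [MeasurableSpace β]
    {mΩ : MeasurableSpace Ω} (μ : Measure Ω) (m : MeasurableSpace Ω) (X : Ω → α) (Y : Ω → β)
    (c : ι → α → ℝ) (T : ι → α → β) : Prop where
  measurable_left : Measurable[m] X
  measurable_right : Measurable[mΩ] Y
  condExp_indicator : ∀ A : Set β, MeasurableSet A →
    μ[fun ω => A.indicator (fun _ => (1 : ℝ)) (Y ω) | m] =ᵐ[μ]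
      fun ω => ∑ i, c i (X ω) * A.indicator (fun _ => (1 : ℝ)) (T i (X ω))

namespace IsFiniteTransition

variable {Ω α β ι : Type*} [Fintype ι] [MeasurableSpace α] [MeasurableSpace β]
  {m mΩ : MeasurableSpace Ω} {μ : Measure Ω} [IsFiniteMeasure μ] {X : Ω → α} {Y : Ω → β}
  {c : ι → α → ℝ} {T : ι → α → β}

lemma integrable_indicator (hT : IsFiniteTransition μ m X Y c T) {A : Set β}
    (hA : MeasurableSet A) :
    Integrable (fun ω => A.indicator (fun _ => (1 : ℝ)) (Y ω)) μ :=
  (integrable_const (1 : ℝ)).indicator (hT.measurable_right hA)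

variable {G : Type*} [NormedAddCommGroup G] [NormedSpace ℝ G] [CompleteSpace G]

lemma condExp_indicator_smul (hT : IsFiniteTransition μ m X Y c T) {A : Set β}
    (hA : MeasurableSet A) (v : G) :
    μ[fun ω => A.indicator (fun _ => (1 : ℝ)) (Y ω) • v | m] =ᵐ[μ]
      fun ω => (∑ i, c i (X ω) * A.indicator (fun _ => (1 : ℝ)) (T i (X ω))) • v := by
  have hA' := hT.integrable_indicator hA
  filter_upwards [condExp_smul_of_aestronglyMeasurable_right (m := m) (g := fun _ => v) hA'
    (hA'.smul_const v) aestronglyMeasurable_const, hT.condExp_indicator A hA] with ω hsmul hω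
  exact hsmul.trans (by rw [Pi.smul_apply', hω])

variable [MeasurableSingletonClass β]

lemma condExp_sum_indicator_smul (hT : IsFiniteTransition μ m X Y c T) (N : Finset β)
    (f : β → G) :
    μ[fun ω => ∑ y ∈ N, ({y} : Set β).indicator (fun _ => (1 : ℝ)) (Y ω) • f y | m] =ᵐ[μ]
      fun ω => ∑ i, c i (X ω) •
        ∑ y ∈ N, ({y} : Set β).indicator (fun _ => (1 : ℝ)) (T i (X ω)) • f y := by
  have hsum := condExp_finsetSum (μ := μ) (s := N) (fun y _ =>
    (hT.integrable_indicator (measurableSet_singleton y)).smul_const (f y)) m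
  have hall := (ae_ball_iff N.countable_toSet).2 fun y _ =>
    hT.condExp_indicator_smul (measurableSet_singleton y) (f y)
  rw [Finset.sum_fn] at hsum
  filter_upwards [hsum, hall] with ω hsum hall
  rw [hsum, Finset.sum_apply, Finset.sum_congr rfl hall]
  simp only [Finset.sum_smul, Finset.smul_sum, mul_smul]
  exact Finset.sum_comm

variable [MeasurableSingletonClass α]

lemma ae_exists_eq_move (hT : IsFiniteTransition μ m X Y c T) (hm : m ≤ mΩ) {C : Set α}
    (hC : C.Countable) (hX : ∀ᵐ ω ∂μ, X ω ∈ C) : ∀ᵐ ω ∂μ, ∃ i, Y ω = T i (X ω) := by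
  have hfiber : ∀ x ∈ C, ∀ᵐ ω ∂μ, X ω = x → ∃ i, Y ω = T i (X ω) := fun x _ => by
    have hs : MeasurableSet[m] (X ⁻¹' {x}) := hT.measurable_left (measurableSet_singleton x)
    set A : Set β := (range fun i => T i x)ᶜ with hA
    have hAm : MeasurableSet A := (finite_range _).measurableSet.compl
    have hcond : μ[fun ω => A.indicator (fun _ => (1 : ℝ)) (Y ω) | m]
        =ᵐ[μ.restrict (X ⁻¹' {x})] 0 := by
      refine (ae_restrict_iff' (hm _ hs)).2 ?_
      filter_upwards [hT.condExp_indicator A hAm] with ω hω hx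
      have hx : X ω = x := hx
      rw [hω]
      simp [hx, hA]
    have hzero := ae_eq_restrict_zero_of_condExp hm
      (fun ω => indicator_nonneg (fun _ _ => zero_le_one) _) (hT.integrable_indicator hAm) hs hcond
    filter_upwards [(ae_restrict_iff' (hm _ hs)).1 hzero] with ω hω hx
    by_contra! hne
    have hYA : Y ω ∈ A := by rintro ⟨i, hi⟩; exact hne i (by rw [hx, ← hi])
    simpa [hYA] using hω hx
  filter_upwards [(ae_ball_iff hC).2 hfiber, hX] with ω hω hXω using hω _ hXω rfl

lemma condExp_comp (hT : IsFiniteTransition μ m X Y c T) (hm : m ≤ mΩ) {C : Set α}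
    (hC : C.Countable) (hX : ∀ᵐ ω ∂μ, X ω ∈ C) {g : α → β → G}
    (hg : Integrable (fun ω => g (X ω) (Y ω)) μ) :
    μ[fun ω => g (X ω) (Y ω) | m] =ᵐ[μ] fun ω => ∑ i, c i (X ω) • g (X ω) (T i (X ω)) := by
  classical
  have hfiber : ∀ x ∈ C, ∀ᵐ ω ∂μ, X ω = x → (μ[fun ω => g (X ω) (Y ω) | m]) ω =
      ∑ i, c i (X ω) • g (X ω) (T i (X ω)) := fun x _ => by
    have hs : MeasurableSet[m] (X ⁻¹' {x}) := hT.measurable_left (measurableSet_singleton x)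
    set N : Finset β := Finset.univ.image fun i => T i x
    set f : β → G := fun z => ∑ y ∈ N, ({y} : Set β).indicator (fun _ => (1 : ℝ)) z • g x y
    have hf : ∀ i, f (T i x) = g x (T i x) := fun i => by
      have hi : T i x ∈ N := Finset.mem_image_of_mem _ (Finset.mem_univ i)
      simp [f, indicator_apply, hi]
    have hfi : Integrable (fun ω => f (Y ω)) μ := integrable_finsetSum _ fun y _ =>
      (hT.integrable_indicator (measurableSet_singleton y)).smul_const (g x y)
    have hgf : (fun ω => g (X ω) (Y ω)) =ᵐ[μ.restrict (X ⁻¹' {x})] fun ω => f (Y ω) := by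
      refine (ae_restrict_iff' (hm _ hs)).2 ?_
      filter_upwards [hT.ae_exists_eq_move hm hC hX] with ω ⟨i, hi⟩ hx
      have hx : X ω = x := hx
      rw [hi, hx, hf]
    filter_upwards [(ae_restrict_iff' (hm _ hs)).1
      (condExp_ae_eq_restrict_of_ae_eq_restrict hg hfi hs hgf),
      hT.condExp_sum_indicator_smul N (g x)] with ω hcond hsum hx
    rw [hcond hx, hsum, hx]
    exact Finset.sum_congr rfl fun i _ => by rw [← hf i]
  filter_upwards [(ae_ball_iff hC).2 hfiber, hX] with ω hω hXω using hω _ hXω rfl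

end IsFiniteTransition

namespace RWI

section Lattice

variable {a h : ℝ} {i j : Fin 2} {x : E}

lemma vec_add (x y z x' y' z' : ℝ) :
    vec x y z + vec x' y' z' = vec (x + x') (y + y') (z + z') := by
  ext i
  fin_cases i <;> simp [vec]

lemma smul_vec (c x y z : ℝ) : c • vec x y z = vec (c * x) (c * y) (c * z) := by
  ext i
  fin_cases i <;> simp [vec]

lemma vec_zero : vec 0 0 0 = 0 := by
  ext i
  fin_cases i <;> simp [vec]

lemma countable_V (a h : ℝ) (i : Fin 2) : (V a h i).Countable := by
  refine (countable_range fun t : ℤ × ℤ × ℤ => vec (a * ((i : ℕ) + (3 / 2) * t.1))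
    (a * ((√3 / 2) * t.1 + √3 * t.2.1)) (h * t.2.2)).mono ?_
  rintro _ ⟨k, l, n, rfl⟩
  exact ⟨(k, l, n), rfl⟩

lemma eq_of_mem_V (ha : a ≠ 0) (hi : x ∈ V a h i) (hj : x ∈ V a h j) : i = j := by
  obtain ⟨k, l, n, rfl⟩ := hi
  obtain ⟨k', l', n', hx⟩ := hj
  have hfst : a * ((i : ℕ) + 3 / 2 * k) = a * ((j : ℕ) + 3 / 2 * k') := by
    simpa [vec] using congrArg (fun v : E => v 0) hx
  have hreal : (2 * (i : ℕ) + 3 * k : ℝ) = 2 * (j : ℕ) + 3 * k' := by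
    linarith [mul_left_cancel₀ ha hfst]
  have hint : 2 * ((i : ℕ) : ℤ) + 3 * k = 2 * ((j : ℕ) : ℤ) + 3 * k' := by exact_mod_cast hreal
  omega

/-- The sign of a point: `1` on `V 0`, `-1` on `V 1` and `0` off the lattice, so that
`ε_n = latticeSign (S_n)`. -/
def latticeSign (a h : ℝ) (x : E) : ℝ :=
  (V a h 0).indicator (fun _ => (1 : ℝ)) x - (V a h 1).indicator (fun _ => (1 : ℝ)) x

lemma epsI_eq_latticeSign {Ω : Type} (a h : ℝ) (S : ℕ → Ω → E) (n : ℕ) (ω : Ω) :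
    epsI a h S n ω = latticeSign a h (S n ω) := rfl

lemma latticeSign_of_mem_V (ha : a ≠ 0) (hx : x ∈ V a h i) :
    latticeSign a h x = (-1) ^ (i : ℕ) := by
  have hiff : ∀ j, x ∈ V a h j ↔ i = j := fun j =>
    ⟨eq_of_mem_V ha hx, fun hij => hij ▸ hx⟩
  fin_cases i <;> simp [latticeSign, hiff]

lemma abs_latticeSign_le_one (a h : ℝ) (x : E) : |latticeSign a h x| ≤ 1 := by
  by_cases h0 : x ∈ V a h 0 <;> by_cases h1 : x ∈ V a h 1 <;> simp [latticeSign, h0, h1]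

lemma measurable_latticeSign (a h : ℝ) : Measurable (latticeSign a h) :=
  (measurable_const.indicator (countable_V a h 0).measurableSet).sub
    (measurable_const.indicator (countable_V a h 1).measurableSet)

end Lattice

section Jumps

variable {a h : ℝ} {i : Fin 2} {x : E}

-- The coordinates have the shape of those in `V a h 1`, with integers `k` and `l` depending on `j`.
lemma w_eq_smul_vec (a : ℝ) (i : Fin 2) (j : Fin 3) :
    w a i j = (-1 : ℝ) ^ (i : ℕ) • vec (a * (1 + 3 / 2 * (![0, -1, -1] j : ℤ)))
      (a * (√3 / 2 * (![0, -1, -1] j : ℤ) + √3 * (![0, 1, 0] j : ℤ))) 0 := by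
  have hcos : cos (2 * (j : ℕ) * π / 3) = 1 + 3 / 2 * (![0, -1, -1] j : ℤ) := by
    fin_cases j
    · simp
    · norm_num [show 2 * π / 3 = π - π / 3 by ring, cos_pi_sub]
    · norm_num [show 4 * π / 3 = π / 3 + π by ring, cos_add_pi]
  have hsin : sin (2 * (j : ℕ) * π / 3) =
      √3 / 2 * (![0, -1, -1] j : ℤ) + √3 * (![0, 1, 0] j : ℤ) := by
    fin_cases j
    · simp
    · norm_num [show 2 * π / 3 = π - π / 3 by ring, sin_pi_sub]
      ring
    · norm_num [show 4 * π / 3 = π / 3 + π by ring, sin_add_pi]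
  rw [w, smul_vec, cos_add_nat_mul_pi, sin_add_nat_mul_pi, hcos, hsin]
  congr 1 <;> ring

/-- The jumps available at a vertex of type `i`: up, down, and the three horizontal ones. -/
def jump (a h : ℝ) (i : Fin 2) : Bool ⊕ Fin 3 → E
  | .inl up => vec 0 0 (if up then h else -h)
  | .inr j => w a i j

/-- The probabilities of the jumps `jump a h i` of the walk. -/
def jumpProb (p α : ℝ) (q : Fin 2 → Fin 3 → ℝ) (i : Fin 2) : Bool ⊕ Fin 3 → ℝ
  | .inl up => if up then α * p else (1 - α) * p
  | .inr j => q i j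

/-- The projection of `ℝ³` onto the vertical axis. -/
def verticalPart (v : E) : E := vec 0 0 (v 2)

lemma verticalPart_vec (x y z : ℝ) : verticalPart (vec x y z) = vec 0 0 z := by
  simp [verticalPart, vec]

lemma verticalPart_w (a : ℝ) (i : Fin 2) (j : Fin 3) : verticalPart (w a i j) = 0 := by
  rw [w, verticalPart_vec, vec_zero]

lemma add_jump_inl_mem_V (hx : x ∈ V a h i) (up : Bool) : x + jump a h i (.inl up) ∈ V a h i := by
  obtain ⟨k, l, n, rfl⟩ := hx
  refine ⟨k, l, n + if up then 1 else -1, ?_⟩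
  cases up <;> simp [jump, vec_add, mul_add]

lemma add_jump_inr_mem_V (hx : x ∈ V a h i) (j : Fin 3) :
    x + jump a h i (.inr j) ∈ V a h (1 - i) := by
  obtain ⟨k, l, n, rfl⟩ := hx
  refine ⟨k + (-1) ^ (i : ℕ) * ![0, -1, -1] j, l + (-1) ^ (i : ℕ) * ![0, 1, 0] j, n, ?_⟩
  have htype : (((1 - i : Fin 2) : ℕ) : ℝ) = (i : ℕ) + (-1) ^ (i : ℕ) := by
    fin_cases i <;> simp
  rw [jump, w_eq_smul_vec, smul_vec, vec_add, htype]
  push_cast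
  congr 1 <;> ring

lemma latticeSign_add_jump_inl (ha : a ≠ 0) (hx : x ∈ V a h i) (up : Bool) :
    latticeSign a h (x + jump a h i (.inl up)) = latticeSign a h x := by
  rw [latticeSign_of_mem_V ha hx, latticeSign_of_mem_V ha (add_jump_inl_mem_V hx up)]

lemma latticeSign_add_jump_inr (ha : a ≠ 0) (hx : x ∈ V a h i) (j : Fin 3) :
    latticeSign a h (x + jump a h i (.inr j)) = -latticeSign a h x := by
  rw [latticeSign_of_mem_V ha hx, latticeSign_of_mem_V ha (add_jump_inr_mem_V hx j)]
  fin_cases i <;> simp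

lemma latticeSign_add_jump_smul_jump (ha : a ≠ 0) (hx : x ∈ V a h i) (k : Bool ⊕ Fin 3) :
    latticeSign a h (x + jump a h i k) • jump a h i k =
      latticeSign a h x • ((2 : ℝ) • verticalPart (jump a h i k) - jump a h i k) := by
  rcases k with up | j
  · have hvert : verticalPart (jump a h i (.inl up)) = jump a h i (.inl up) :=
      verticalPart_vec 0 0 _
    rw [latticeSign_add_jump_inl ha hx, hvert]
    module
  · have hvert : verticalPart (jump a h i (.inr j)) = 0 := verticalPart_w a i j
    rw [latticeSign_add_jump_inr ha hx, hvert]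
    module

variable {p α : ℝ} {q : Fin 2 → Fin 3 → ℝ}

lemma sum_jumpProb_smul_verticalPart_jump (a h p α : ℝ) (q : Fin 2 → Fin 3 → ℝ) (i : Fin 2) :
    ∑ k, jumpProb p α q i k • verticalPart (jump a h i k) = zetaI h p α := by
  simp only [Fintype.sum_sum_type, Fintype.sum_bool, jumpProb, jump, verticalPart_w,
    verticalPart_vec, smul_vec, vec_add, smul_zero, Finset.sum_const_zero, add_zero, zetaI, if_true,
    Bool.false_eq_true, if_false]
  congr 1 <;> ring

lemma sum_jumpProb_smul_jump (hq : q i 0 + q i 1 + q i 2 = 1 - p) :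
    ∑ k, jumpProb p α q i k • jump a h i k =
      muI a h p α q + (-1 : ℝ) ^ (i : ℕ) • thetaI a p q := by
  have hq0 : q i 0 = 1 - p - q i 1 - q i 2 := by linarith
  simp only [Fintype.sum_sum_type, Fintype.sum_bool, Fin.sum_univ_three, jumpProb, jump,
    w_eq_smul_vec, Matrix.cons_val, Int.cast_neg, Int.cast_one, Int.cast_zero, if_true,
    Bool.false_eq_true, if_false, smul_vec, vec_add, thetaI, muI, uu, vv, hq0]
  obtain rfl | rfl : i = 0 ∨ i = 1 := by omega
  all_goals
    simp only [Fin.val_zero, Fin.val_one, pow_zero, pow_one]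
    congr 1 <;> ring

lemma sum_jumpProb_mul_latticeSign (ha : a ≠ 0) (hq : q i 0 + q i 1 + q i 2 = 1 - p)
    (hx : x ∈ V a h i) :
    ∑ k, jumpProb p α q i k * latticeSign a h (x + jump a h i k) =
      (2 * p - 1) * latticeSign a h x := by
  simp only [Fintype.sum_sum_type, Fintype.sum_bool, Fin.sum_univ_three, jumpProb,
    latticeSign_add_jump_inl ha hx, latticeSign_add_jump_inr ha hx, if_true, Bool.false_eq_true,
    if_false]
  linear_combination -latticeSign a h x * hq

end Jumps

namespace IsRWI

variable {Ω : Type} [MeasurableSpace Ω] {P : Measure Ω} {a h p α : ℝ} {q : Fin 2 → Fin 3 → ℝ}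
  {S : ℕ → Ω → E} {F : ℕ → MeasurableSpace Ω}

lemma filtration_le (hRW : IsRWI P a h p α q S F) (n : ℕ) : F n ≤ ‹MeasurableSpace Ω› := by
  rw [hRW.hF n]
  exact (measurable_pi_lambda _ fun k => (hRW.hSmeas _).sub (hRW.hSmeas _)).comap_le

lemma measurable_position (hRW : IsRWI P a h p α q S F) (n : ℕ) : Measurable[F n] (S n) := by
  have hsum : S n = fun ω => ∑ k : Fin n, (S ((k : ℕ) + 1) ω - S (k : ℕ) ω) := by
    funext ω
    rw [Fin.sum_univ_eq_sum_range (fun k => S (k + 1) ω - S k ω) n,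
      Finset.sum_range_sub (fun k => S k ω), hRW.hS0, sub_zero]
  have hincr : Measurable[F n] (fun ω (k : Fin n) => S ((k : ℕ) + 1) ω - S (k : ℕ) ω) := by
    rw [hRW.hF n]
    exact comap_measurable _
  have hadd : Measurable fun v : Fin n → E => ∑ k, v k := by fun_prop
  rw [hsum]
  exact hadd.comp hincr

lemma ae_mem_V (hRW : IsRWI P a h p α q S F) (n : ℕ) : ∀ᵐ ω ∂P, ∃ i, S n ω ∈ V a h i := by
  have := hRW.prob
  have hone := hRW.hTrans n (fun _ => 1) measurable_const ⟨1, by simp⟩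
  rw [condExp_const (hRW.filtration_le n)] at hone
  filter_upwards [hone] with ω hω
  by_contra! hV
  simp [hV] at hω

lemma isFiniteTransition (hRW : IsRWI P a h p α q S F) (n : ℕ) :
    IsFiniteTransition P (F n) (S n) (S (n + 1))
      (fun k : Fin 2 × (Bool ⊕ Fin 3) => (V a h k.1).indicator fun _ => jumpProb p α q k.1 k.2)
      (fun k x => x + jump a h k.1 k.2) where
  measurable_left := hRW.measurable_position n
  measurable_right := hRW.hSmeas (n + 1)
  condExp_indicator A hA := by
    refine (hRW.hTrans n _ (measurable_const.indicator hA) ⟨1, fun x => ?_⟩).trans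
      (ae_of_all _ fun ω => ?_)
    · by_cases hx : x ∈ A <;> simp [hx]
    · simp only [Fintype.sum_prod_type]
      refine Finset.sum_congr rfl fun i _ => ?_
      by_cases hi : S n ω ∈ V a h i <;> simp [hi, jumpProb, jump]

lemma ae_mem_iUnion_V (hRW : IsRWI P a h p α q S F) (n : ℕ) :
    ∀ᵐ ω ∂P, S n ω ∈ ⋃ i, V a h i :=
  (hRW.ae_mem_V n).mono fun _ => mem_iUnion.2

lemma ae_exists_increment_eq_jump (hRW : IsRWI P a h p α q S F) (n : ℕ) :
    ∀ᵐ ω ∂P, ∃ i k, S (n + 1) ω - S n ω = jump a h i k := by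
  have := hRW.prob
  filter_upwards [(hRW.isFiniteTransition n).ae_exists_eq_move (hRW.filtration_le n)
    (countable_iUnion (countable_V a h)) (hRW.ae_mem_iUnion_V n)] with ω ⟨k, hk⟩
  exact ⟨k.1, k.2, by rw [hk, add_sub_cancel_left]⟩

lemma integrable_increment (hRW : IsRWI P a h p α q S F) (n : ℕ) :
    Integrable (fun ω => S (n + 1) ω - S n ω) P := by
  have := hRW.prob
  obtain ⟨C, hC⟩ := (finite_range fun k : Fin 2 × (Bool ⊕ Fin 3) => ‖jump a h k.1 k.2‖).bddAbove
  refine .of_bound ((hRW.hSmeas _).sub (hRW.hSmeas _)).aestronglyMeasurable C ?_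
  filter_upwards [hRW.ae_exists_increment_eq_jump n] with ω ⟨i, k, hk⟩
  exact hk ▸ hC ⟨(i, k), rfl⟩

lemma condExp_comp (hRW : IsRWI P a h p α q S F) (n : ℕ) {G : Type*} [NormedAddCommGroup G]
    [NormedSpace ℝ G] [CompleteSpace G] {g : E → E → G}
    (hg : Integrable (fun ω => g (S n ω) (S (n + 1) ω)) P) :
    ∀ᵐ ω ∂P, ∀ i, S n ω ∈ V a h i → (P[fun ω => g (S n ω) (S (n + 1) ω) | F n]) ω =
      ∑ k, jumpProb p α q i k • g (S n ω) (S n ω + jump a h i k) := by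
  have := hRW.prob
  filter_upwards [(hRW.isFiniteTransition n).condExp_comp (hRW.filtration_le n)
    (countable_iUnion (countable_V a h)) (hRW.ae_mem_iUnion_V n) hg] with ω hω i hi
  rw [hω, Fintype.sum_prod_type, Fintype.sum_eq_single i]
  · simp only [indicator_of_mem hi]
  · intro j hji
    have hj : S n ω ∉ V a h j := fun hj => hji (eq_of_mem_V hRW.ha.ne' hj hi)
    simp only [indicator_of_notMem hj, zero_smul, Finset.sum_const_zero]

lemma aestronglyMeasurable_epsI (hRW : IsRWI P a h p α q S F) (n : ℕ) :
    AEStronglyMeasurable (epsI a h S n) P :=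
  ((measurable_latticeSign a h).comp (hRW.hSmeas n)).aestronglyMeasurable

lemma condExp_increment_of_mem_V (hRW : IsRWI P a h p α q S F) (n : ℕ) :
    ∀ᵐ ω ∂P, ∀ i, S n ω ∈ V a h i → (P[fun ω' => S (n + 1) ω' - S n ω' | F n]) ω =
      ∑ k, jumpProb p α q i k • jump a h i k := by
  simpa only [add_sub_cancel_left] using
    hRW.condExp_comp n (g := fun x y => y - x) (hRW.integrable_increment n)

lemma condExp_increment (hRW : IsRWI P a h p α q S F) (n : ℕ) :
    P[fun ω => S (n + 1) ω - S n ω | F n] =ᵐ[P]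
      fun ω => muI a h p α q + epsI a h S n ω • thetaI a p q := by
  filter_upwards [hRW.condExp_increment_of_mem_V n, hRW.ae_mem_V n] with ω hω ⟨i, hi⟩
  rw [hω i hi, sum_jumpProb_smul_jump (hRW.hqsum i), epsI_eq_latticeSign,
    latticeSign_of_mem_V hRW.ha.ne' hi]

lemma condExp_epsI (hRW : IsRWI P a h p α q S F) (n : ℕ) :
    P[epsI a h S (n + 1) | F n] =ᵐ[P] fun ω => (2 * p - 1) * epsI a h S n ω := by
  have := hRW.prob
  have hε : Integrable (epsI a h S (n + 1)) P :=
    .of_bound (hRW.aestronglyMeasurable_epsI _) 1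
      (ae_of_all _ fun _ => abs_latticeSign_le_one a h _)
  filter_upwards [hRW.condExp_comp n (g := fun _ y => latticeSign a h y) hε, hRW.ae_mem_V n]
    with ω hω ⟨i, hi⟩
  exact (hω i hi).trans (sum_jumpProb_mul_latticeSign hRW.ha.ne' (hRW.hqsum i) hi)

lemma condExp_epsI_smul_increment (hRW : IsRWI P a h p α q S F) (n : ℕ) :
    P[fun ω => epsI a h S (n + 1) ω • (S (n + 1) ω - S n ω) | F n] =ᵐ[P] fun ω =>
      epsI a h S n ω • ((2 : ℝ) • zetaI h p α - (P[fun ω' => S (n + 1) ω' - S n ω' | F n]) ω) := by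
  have hint : Integrable (fun ω => epsI a h S (n + 1) ω • (S (n + 1) ω - S n ω)) P :=
    (hRW.integrable_increment n).bdd_smul 1 (hRW.aestronglyMeasurable_epsI _)
      (ae_of_all _ fun _ => abs_latticeSign_le_one a h _)
  filter_upwards [hRW.condExp_comp n (g := fun x y => latticeSign a h y • (y - x)) hint,
    hRW.condExp_increment_of_mem_V n, hRW.ae_mem_V n] with ω hεξ hξ ⟨i, hi⟩
  refine (hεξ i hi).trans ?_
  rw [hξ i hi, ← sum_jumpProb_smul_verticalPart_jump a h p α q i]
  simp only [add_sub_cancel_left, latticeSign_add_jump_smul_jump hRW.ha.ne' hi, Finset.smul_sum,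
    ← Finset.sum_sub_distrib]
  exact Finset.sum_congr rfl fun k _ => by rw [epsI_eq_latticeSign]; module

lemma ae_epsI_mul_self (hRW : IsRWI P a h p α q S F) (n : ℕ) :
    ∀ᵐ ω ∂P, epsI a h S n ω * epsI a h S n ω = 1 := by
  filter_upwards [hRW.ae_mem_V n] with ω ⟨i, hi⟩
  rw [epsI_eq_latticeSign, latticeSign_of_mem_V hRW.ha.ne' hi, ← mul_pow, neg_one_mul, neg_neg,
    one_pow]

lemma condExp_epsI_smul_increment_sub (hRW : IsRWI P a h p α q S F) (n : ℕ) :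
    ∀ᵐ ω ∂P, (P[fun ω' => epsI a h S (n + 1) ω' • (S (n + 1) ω' - S n ω') | F n]) ω -
        (P[epsI a h S (n + 1) | F n]) ω • (P[fun ω' => S (n + 1) ω' - S n ω' | F n]) ω =
      (-(2 * p)) • thetaI a p q +
        (2 * epsI a h S n ω) • (zetaI h p α - p • muI a h p α q) := by
  filter_upwards [hRW.condExp_epsI_smul_increment n, hRW.condExp_epsI n, hRW.condExp_increment n,
    hRW.ae_epsI_mul_self n] with ω hεξ hε hξ hsq
  rw [hεξ, hε, hξ]
  linear_combination (norm := module) (-(2 * p)) • congrArg (fun t : ℝ => t • thetaI a p q) hsq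

end IsRWI

end RWI

theorem rwi_covariation {Ω : Type} [MeasurableSpace Ω] (P : Measure Ω)
    (a h p α : ℝ) (q : Fin 2 → Fin 3 → ℝ)
    (S : ℕ → Ω → RWI.E) (F : ℕ → MeasurableSpace Ω)
    (hRW : RWI.IsRWI P a h p α q S F) :
    (∀ n : ℕ, P[fun ω => RWI.epsI a h S (n + 1) ω • (S (n + 1) ω - S n ω)|F n] =ᵐ[P]
      fun ω => RWI.epsI a h S n ω •
        ((2 : ℝ) • RWI.zetaI h p α - (P[fun ω' => S (n + 1) ω' - S n ω'|F n]) ω)) ∧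
    (∀ n : ℕ, 1 ≤ n → ∀ᵐ ω ∂P,
      ∑ k ∈ Finset.Icc 1 n,
        ((P[fun ω' => RWI.epsI a h S k ω' • (S k ω' - S (k - 1) ω')|F (k - 1)]) ω -
          (P[fun ω' => RWI.epsI a h S k ω'|F (k - 1)]) ω •
            (P[fun ω' => S k ω' - S (k - 1) ω'|F (k - 1)]) ω) =
        (-(2 * n * p)) • RWI.thetaI a p q +
          (2 * RWI.II a h S (n - 1) ω) • (RWI.zetaI h p α - p • RWI.muI a h p α q)) := by
  refine ⟨hRW.condExp_epsI_smul_increment, fun n hn => ?_⟩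
  filter_upwards [ae_all_iff.2 hRW.condExp_epsI_smul_increment_sub] with ω hω
  rw [← Finset.Ico_add_one_right_eq_Icc, Finset.sum_Ico_eq_sum_range, RWI.II,
    Nat.sub_add_cancel hn]
  simp only [add_comm 1, Nat.add_sub_cancel, hω, Finset.sum_add_distrib, Finset.sum_const,
    Finset.card_range, ← Finset.sum_smul, ← Finset.mul_sum, ← Nat.cast_smul_eq_nsmul ℝ, smul_smul]
  congr 2
  ring
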